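/- Let X be a separable Banach space over ℝ (or ℂ), let (fₙ)ₙ∈ℕ be a sequence of continuous linear functionals on X and (τₙ)ₙ∈ℕ a sequence in X forming an approximate Schauder frame for X. Assume the pair is bounded below, i.e. C := inf_{n∈ℕ} |fₙ(τₙ)| > 0, and intrinsically localized, i.e. there exist s > 1 and A > 0 such that |fₙ(τₘ)| ≤ A/(1+|n−m|)^s for all n, m ∈ ℕ. Then there exist N ∈ ℕ and a partition Q₁, …, Q_N of ℕ (ℕ = Q₁ ∪ ⋯ ∪ Q_N, pairwise disjoint) such that for each j with 1 ≤ j ≤ N, inf_{n∈Q_j} ( |fₙ(τₙ)| − Σ_{m∈Q_j, m≠n} |fₙ(τₘ)| ) > 0; that is, the pair ((fₙ), (τₙ)) is an approximate Riesz sequence. -/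

import Mathlib

/-!
Localization dominates the matrix `f n (τ m)` entrywise by `g (n - m)` for a summable kernel `g`
on `ℤ`. Two distinct indices in the same residue class modulo `N` differ by a nonzero multiple of
`N`, so every off-diagonal row sum within such a class is at most the sum of `g` over the nonzero
multiples of `N`. This tends to `0` as `N → ∞`, hence eventually stays well below the lower bound
of the diagonal.
-/

open Filter Topology

section Kernel

theorem tendsto_tsum_subtype_zero_of_eventually_notMem {α β E : Type*} [NormedAddCommGroup E]
    [CompleteSpace E] {l : Filter β} {g : α → E} (hg : Summable fun a => ‖g a‖)
    {K : β → Set α} (hK : ∀ a, ∀ᶠ b in l, a ∉ K b) :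
    Tendsto (fun b => ∑' a : K b, g a) l (𝓝 0) := by
  have pointwise (a : α) : Tendsto (fun b => (K b).indicator g a) l (𝓝 0) :=
    tendsto_const_nhds.congr' <|
      (hK a).mono fun _ ha => (Set.indicator_of_notMem ha g).symm
  have dominated : ∀ᶠ b in l, ∀ a, ‖(K b).indicator g a‖ ≤ ‖g a‖ :=
    .of_forall fun _ _ => norm_indicator_le_norm_self g _
  simpa only [tsum_subtype, tsum_zero] using
    tendsto_tsum_of_dominated_convergence hg pointwise dominated

theorem eventually_notMem_ne_zero_multiples (k : ℤ) :
    ∀ᶠ N : ℕ in atTop, k ∉ {d : ℤ | (d : ZMod N) = 0 ∧ d ≠ 0} := by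
  filter_upwards [eventually_gt_atTop k.natAbs] with N hN
  rintro ⟨hk, hk0⟩
  have hdvd : (N : ℤ) ∣ k := (ZMod.intCast_zmod_eq_zero_iff_dvd k N).mp hk
  exact hk0 (Int.eq_zero_of_dvd_of_natAbs_lt_natAbs hdvd (by simpa using hN))

theorem summable_div_one_add_abs_int_rpow (A : ℝ) {s : ℝ} (hs : 1 < s) :
    Summable fun k : ℤ => A / (1 + |(k : ℝ)|) ^ s := by
  have hnat : Summable fun k : ℕ => A / (1 + (k : ℝ)) ^ s := by
    refine (((Real.summable_one_div_nat_add_rpow 1 s).mpr hs).mul_left A).congr fun k => ?_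
    rw [mul_one_div, add_comm, abs_of_nonneg (by positivity)]
  exact .of_nat_of_neg (by simpa using hnat) (by simpa using hnat)

end Kernel

/-- The rows of the matrix `a`, restricted to the index set `Q`, are strictly diagonally dominant
with margin `c`. For `a n m = f n (τ m)` and some `c > 0` this is the condition imposed on each
piece of the partition in the definition of an approximate Riesz sequence. Summability is required
explicitly because the `tsum` of a divergent series is `0`. -/
def IsDiagDominantOn {ι E : Type*} [SeminormedAddCommGroup E] (a : ι → ι → E) (Q : Set ι)
    (c : ℝ) : Prop :=
  ∀ n ∈ Q, Summable (fun m : {m : ι // m ∈ Q ∧ m ≠ n} => ‖a n m‖) ∧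
    c ≤ ‖a n n‖ - ∑' m : {m : ι // m ∈ Q ∧ m ≠ n}, ‖a n m‖

section DiagDominant

variable {ι E : Type*} [SeminormedAddCommGroup E] {a : ι → ι → E} {C : ℝ}

theorem IsDiagDominantOn.mono_margin {Q : Set ι} {c d : ℝ} (h : IsDiagDominantOn a Q d)
    (hcd : c ≤ d) : IsDiagDominantOn a Q c :=
  fun n hn => (h n hn).imp_right hcd.trans

theorem isDiagDominantOn_of_sub_mem {G : Type*} [AddGroup G] {p : ι → G}
    (hp : Function.Injective p) {g : G → ℝ} (hg : Summable g)
    (hag : ∀ n m, ‖a n m‖ ≤ g (p n - p m)) (hC : ∀ n, C ≤ ‖a n n‖) {Q : Set ι} {K : Set G}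
    (hQK : ∀ n ∈ Q, ∀ m ∈ Q, m ≠ n → p n - p m ∈ K) :
    IsDiagDominantOn a Q (C - ∑' k : K, |g k|) := by
  intro n hn
  let diff : {m : ι // m ∈ Q ∧ m ≠ n} → K :=
    fun m => ⟨p n - p m, hQK n hn m m.2.1 m.2.2⟩
  have diff_injective : Function.Injective diff := fun m m' h =>
    Subtype.ext <| hp <| sub_right_injective <| congrArg Subtype.val h
  have norm_le (m : {m : ι // m ∈ Q ∧ m ≠ n}) : ‖a n m‖ ≤ |g (diff m)| :=
    (hag n m).trans (le_abs_self _)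
  have hgK : Summable fun k : K => |g k| := hg.abs.subtype K
  have hrow : Summable fun m : {m : ι // m ∈ Q ∧ m ≠ n} => ‖a n m‖ :=
    .of_nonneg_of_le (fun _ => norm_nonneg _) norm_le (hgK.comp_injective diff_injective)
  have tsum_row_le : ∑' m : {m : ι // m ∈ Q ∧ m ≠ n}, ‖a n m‖ ≤ ∑' k : K, |g k| :=
    hrow.tsum_le_tsum_of_inj diff diff_injective (fun _ _ => abs_nonneg _) norm_le hgK
  exact ⟨hrow, sub_le_sub (hC n) tsum_row_le⟩

variable {p : ι → ℤ} {g : ℤ → ℝ}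

theorem eventually_isDiagDominantOn_residueClass (hp : Function.Injective p) (hg : Summable g)
    (hag : ∀ n m, ‖a n m‖ ≤ g (p n - p m)) (hC : ∀ n, C ≤ ‖a n n‖) {c : ℝ} (hc : c < C) :
    ∀ᶠ N : ℕ in atTop, ∀ r : ZMod N, IsDiagDominantOn a {n | (p n : ZMod N) = r} c := by
  have tail_tendsto := tendsto_tsum_subtype_zero_of_eventually_notMem hg.abs.norm
    eventually_notMem_ne_zero_multiples
  filter_upwards [tail_tendsto.eventually_lt_const (sub_pos.mpr hc)] with N hN r
  refine (isDiagDominantOn_of_sub_mem hp hg hag hC ?_).mono_margin (le_sub_comm.mp hN.le)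
  rintro n rfl m hmn hne
  refine ⟨?_, sub_ne_zero.mpr (hp.ne hne.symm)⟩
  rw [Int.cast_sub, hmn, sub_self]

theorem localized_bounded_below_ASF_is_finite_union_of_ARS_general (hp : Function.Injective p)
    (hg : Summable g) (hag : ∀ n m, ‖a n m‖ ≤ g (p n - p m)) (hC : 0 < C)
    (hbb : ∀ n, C ≤ ‖a n n‖) :
    ∃ (N : ℕ) (Q : Fin N → Set ι), (∀ n, ∃! j, n ∈ Q j) ∧
      ∀ j, ∃ c : ℝ, 0 < c ∧ IsDiagDominantOn a (Q j) c := by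
  obtain ⟨N, hdom, hN⟩ :=
    ((eventually_isDiagDominantOn_residueClass hp hg hag hbb (half_lt_self hC)).and
      (eventually_ne_atTop 0)).exists
  have : NeZero N := ⟨hN⟩
  let residue : Fin N ≃+* ZMod N := ZMod.finEquiv N
  refine ⟨N, fun j => {n | (p n : ZMod N) = residue j}, fun n => ?_,
    fun j => ⟨C / 2, half_pos hC, hdom (residue j)⟩⟩
  simpa only [Set.mem_ofPred_eq, eq_comm] using residue.bijective.existsUnique (p n : ZMod N)

end DiagDominant

/-- Localized bounded below approximate Schauder frames are finite unions of
approximate Riesz sequences.  Here `(f, τ)` is an ASF for the separable Banach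
space `X` (the frame operator `S x = ∑ n, f n x • τ n` is a bounded invertible
operator), it is bounded below (`inf_n |f n (τ n)| > 0`, witnessed by `C`), and
intrinsically localized with parameters `s > 1`, `A > 0`.  The conclusion is the
existence of a finite partition `Q 0, …, Q (N-1)` of `ℕ` such that on each piece
`inf_{n ∈ Q j} (|f n (τ n)| - ∑_{m ∈ Q j, m ≠ n} |f n (τ m)|) > 0`. -/
theorem localized_bounded_below_ASF_is_finite_union_of_ARS
    (X : Type*) [NormedAddCommGroup X] [NormedSpace ℝ X] [CompleteSpace X]
    [TopologicalSpace.SeparableSpace X]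
    (f : ℕ → X →L[ℝ] ℝ) (τ : ℕ → X)
    -- approximate Schauder frame: the frame operator is well defined, bounded and invertible
    (S : X →L[ℝ] X)
    (hS : ∀ x : X, HasSum (fun n : ℕ => f n x • τ n) (S x))
    (hSinv : ∃ T : X →L[ℝ] X,
      T.comp S = ContinuousLinearMap.id ℝ X ∧ S.comp T = ContinuousLinearMap.id ℝ X)
    -- bounded below: inf_n |f n (τ n)| > 0
    (C : ℝ) (hC : 0 < C) (hbb : ∀ n : ℕ, C ≤ |f n (τ n)|)
    -- intrinsically localized
    (s A : ℝ) (hs : 1 < s) (hA : 0 < A)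
    (hloc : ∀ n m : ℕ, |f n (τ m)| ≤ A / (1 + |(n : ℝ) - (m : ℝ)|) ^ s) :
    ∃ (N : ℕ) (Q : Fin N → Set ℕ),
      (∀ n : ℕ, ∃! j : Fin N, n ∈ Q j) ∧
      ∀ j : Fin N, ∃ c : ℝ, 0 < c ∧ ∀ n ∈ Q j,
        Summable (fun m : {m : ℕ // m ∈ Q j ∧ m ≠ n} => |f n (τ (m : ℕ))|) ∧
        c ≤ |f n (τ n)| - ∑' m : {m : ℕ // m ∈ Q j ∧ m ≠ n}, |f n (τ (m : ℕ))| := by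
  exact localized_bounded_below_ASF_is_finite_union_of_ARS_general (a := fun n m => f n (τ m))
    Nat.cast_injective (summable_div_one_add_abs_int_rpow A hs) (by simpa using hloc) hC hbb
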